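/- arXiv:math/0005042 — 6 statements merged into one kernel-verified Lean document; each statement's English description precedes it below -/
import Mathlib

section
/- If the pair (α, ρ) satisfies conditions (5.3) and (5.4), then the bracket (5.5) makes the vector space h × g into a Lie algebra over 𝕜 (it is bilinear, alternating, and satisfies the Jacobi identity). -/
/-!
For arbitrary `α` and `ρ`, the cyclic sum of double brackets can be computed in closed form. Its
`g`-component vanishes by the Jacobi identity of `g`. In its `h`-component, the terms cubic in `h`
cancel by the Jacobi identity of `h` and the quadratic ones by the Leibniz rule for each `α X`. What
is left is a linear part, measuring the failure of the curvature of `α` to be the inner derivation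
by `ρ` (5.3), and a constant part, the covariant differential of `ρ` (5.4).
-/

/-- The bracket (5.5) on `h × g` determined by `α : g → Der(h)` and an
alternating bilinear `ρ : g × g → h`:
`⁅(H₁,X₁),(H₂,X₂)⁆ = (⁅H₁,H₂⁆ + α X₁ H₂ - α X₂ H₁ + ρ X₁ X₂, ⁅X₁,X₂⁆)`. -/
def extBracket {𝕜 : Type*} [Field 𝕜] {h g : Type*} [LieRing h] [LieAlgebra 𝕜 h]
    [LieRing g] [LieAlgebra 𝕜 g] (α : g →ₗ[𝕜] LieDerivation 𝕜 h h)
    (ρ : g →ₗ[𝕜] g →ₗ[𝕜] h) (p q : h × g) : h × g :=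
  (⁅p.1, q.1⁆ + α p.2 q.1 - α q.2 p.1 + ρ p.2 q.2, ⁅p.2, q.2⁆)

section

variable {L : Type*} [LieRing L]

theorem lie_lie_jacobi (a b c : L) : ⁅⁅a, b⁆, c⁆ + ⁅⁅b, c⁆, a⁆ + ⁅⁅c, a⁆, b⁆ = 0 := by
  rw [lie_lie a b c, ← lie_skew a ⁅b, c⁆, ← lie_skew b ⁅a, c⁆, ← lie_skew c a, neg_lie]
  abel

variable {R : Type*} [CommRing R] [LieAlgebra R L]

theorem lieDerivation_apply_lie_eq_lie_sub_lie (D : LieDerivation R L L) (a b : L) :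
    D ⁅a, b⁆ = ⁅D a, b⁆ - ⁅D b, a⁆ := by
  rw [D.apply_lie_eq_add, ← lie_skew a (D b)]
  abel

end

section TwistedBracket

variable {R : Type*} [CommRing R] {h g : Type*} [LieRing h] [LieAlgebra R h]
  [LieRing g] [LieAlgebra R g]

/-- The curvature of a linear map between Lie algebras: its failure to preserve brackets. The
left-hand side of (5.3) is the case of a map into `Der(h)`. -/
def curvature (α : g →ₗ[R] h) (X Y : g) : h :=
  ⁅α X, α Y⁆ - α ⁅X, Y⁆

/-- The covariant (Chevalley–Eilenberg type) differential of a 2-cochain `ρ` on `g` with values in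
`h` along `α : g → Der(h)`, which need not be a representation: the left-hand side of (5.4). -/
def covariantDifferential (α : g →ₗ[R] LieDerivation R h h) (ρ : g →ₗ[R] g →ₗ[R] h)
    (X Y Z : g) : h :=
  α X (ρ Y Z) + α Y (ρ Z X) + α Z (ρ X Y) - ρ ⁅X, Y⁆ Z - ρ ⁅Y, Z⁆ X - ρ ⁅Z, X⁆ Y

/-- The bracket (5.5) over an arbitrary commutative ring; over a field it is `extBracket`. -/
def twistedBracket (α : g →ₗ[R] LieDerivation R h h) (ρ : g →ₗ[R] g →ₗ[R] h) (p q : h × g) :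
    h × g :=
  (⁅p.1, q.1⁆ + α p.2 q.1 - α q.2 p.1 + ρ p.2 q.2, ⁅p.2, q.2⁆)

variable (α : g →ₗ[R] LieDerivation R h h) (ρ : g →ₗ[R] g →ₗ[R] h)

theorem curvature_apply (X Y : g) (K : h) :
    curvature α X Y K = α X (α Y K) - α Y (α X K) - α ⁅X, Y⁆ K := by
  rw [curvature, LieDerivation.sub_apply, LieDerivation.commutator_apply]

theorem twistedBracket_add_left (p q r : h × g) :
    twistedBracket α ρ (p + q) r = twistedBracket α ρ p r + twistedBracket α ρ q r := by
  ext
  · simp only [twistedBracket, Prod.fst_add, Prod.snd_add, add_lie, map_add,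
      LieDerivation.add_apply, LinearMap.add_apply]
    abel
  · exact add_lie p.2 q.2 r.2

theorem twistedBracket_add_right (p q r : h × g) :
    twistedBracket α ρ p (q + r) = twistedBracket α ρ p q + twistedBracket α ρ p r := by
  ext
  · simp only [twistedBracket, Prod.fst_add, Prod.snd_add, lie_add, map_add,
      LieDerivation.add_apply]
    abel
  · exact lie_add p.2 q.2 r.2

theorem twistedBracket_smul_left (c : R) (p q : h × g) :
    twistedBracket α ρ (c • p) q = c • twistedBracket α ρ p q := by
  ext <;> simp [twistedBracket, smul_add, smul_sub]

theorem twistedBracket_smul_right (c : R) (p q : h × g) :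
    twistedBracket α ρ p (c • q) = c • twistedBracket α ρ p q := by
  ext <;> simp [twistedBracket, smul_add, smul_sub]

variable {ρ} in
theorem twistedBracket_self (halt : ∀ X : g, ρ X X = 0) (p : h × g) :
    twistedBracket α ρ p p = 0 := by
  ext <;> simp [twistedBracket, halt]

theorem twistedBracket_cyclic_sum (p q r : h × g) :
    twistedBracket α ρ (twistedBracket α ρ p q) r + twistedBracket α ρ (twistedBracket α ρ q r) p
        + twistedBracket α ρ (twistedBracket α ρ r p) q =
      ((⁅ρ p.2 q.2, r.1⁆ - curvature α p.2 q.2 r.1) + (⁅ρ q.2 r.2, p.1⁆ - curvature α q.2 r.2 p.1)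
        + (⁅ρ r.2 p.2, q.1⁆ - curvature α r.2 p.2 q.1)
        - covariantDifferential α ρ p.2 q.2 r.2, 0) := by
  obtain ⟨A, X⟩ := p
  obtain ⟨B, Y⟩ := q
  obtain ⟨C, Z⟩ := r
  ext
  · have jacobi_h : ⁅⁅A, B⁆, C⁆ = -⁅⁅B, C⁆, A⁆ - ⁅⁅C, A⁆, B⁆ := by
      rw [← sub_eq_zero, ← lie_lie_jacobi A B C]
      abel
    simp only [twistedBracket, Prod.fst_add, add_lie, sub_lie, map_add, map_sub,
      lieDerivation_apply_lie_eq_lie_sub_lie, curvature_apply, covariantDifferential, jacobi_h]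
    abel
  · exact lie_lie_jacobi X Y Z

variable {α ρ}

theorem twistedBracket_jacobi
    (hcurv : ∀ X Y : g, curvature α X Y = LieDerivation.ad R h (ρ X Y))
    (hcocycle : ∀ X Y Z : g, covariantDifferential α ρ X Y Z = 0) (p q r : h × g) :
    twistedBracket α ρ (twistedBracket α ρ p q) r + twistedBracket α ρ (twistedBracket α ρ q r) p
      + twistedBracket α ρ (twistedBracket α ρ r p) q = 0 := by
  simp [twistedBracket_cyclic_sum, hcurv, hcocycle]

variable (α ρ)

theorem statement3_general (halt : ∀ X : g, ρ X X = 0)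
    (hcurv : ∀ X Y : g, curvature α X Y = LieDerivation.ad R h (ρ X Y))
    (hcocycle : ∀ X Y Z : g, covariantDifferential α ρ X Y Z = 0) :
    (∀ p q r : h × g, twistedBracket α ρ (p + q) r
        = twistedBracket α ρ p r + twistedBracket α ρ q r) ∧
    (∀ p q r : h × g, twistedBracket α ρ p (q + r)
        = twistedBracket α ρ p q + twistedBracket α ρ p r) ∧
    (∀ (c : R) (p q : h × g), twistedBracket α ρ (c • p) q = c • twistedBracket α ρ p q) ∧
    (∀ (c : R) (p q : h × g), twistedBracket α ρ p (c • q) = c • twistedBracket α ρ p q) ∧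
    (∀ p : h × g, twistedBracket α ρ p p = 0) ∧
    (∀ p q r : h × g,
      twistedBracket α ρ (twistedBracket α ρ p q) r + twistedBracket α ρ (twistedBracket α ρ q r) p
        + twistedBracket α ρ (twistedBracket α ρ r p) q = 0) :=
  ⟨twistedBracket_add_left α ρ, twistedBracket_add_right α ρ, twistedBracket_smul_left α ρ,
    twistedBracket_smul_right α ρ, twistedBracket_self α halt,
    twistedBracket_jacobi hcurv hcocycle⟩

end TwistedBracket

/-- If `α : g → Der(h)` is `𝕜`-linear, `ρ : g × g → h` is alternating
`𝕜`-bilinear, and the pair `(α, ρ)` satisfies conditions (5.3) and (5.4), then the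
bracket (5.5) makes the vector space `h × g` into a Lie algebra over `𝕜`: it is
`𝕜`-bilinear, alternating, and satisfies the Jacobi identity. -/
theorem statement3 {𝕜 : Type*} [Field 𝕜] {h g : Type*} [LieRing h] [LieAlgebra 𝕜 h]
    [LieRing g] [LieAlgebra 𝕜 g] (α : g →ₗ[𝕜] LieDerivation 𝕜 h h)
    (ρ : g →ₗ[𝕜] g →ₗ[𝕜] h) (halt : ∀ X : g, ρ X X = 0)
    (h53 : ∀ X Y : g, ⁅α X, α Y⁆ - α ⁅X, Y⁆ = LieDerivation.ad 𝕜 h (ρ X Y))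
    (h54 : ∀ X Y Z : g,
      α X (ρ Y Z) + α Y (ρ Z X) + α Z (ρ X Y)
        - ρ ⁅X, Y⁆ Z - ρ ⁅Y, Z⁆ X - ρ ⁅Z, X⁆ Y = 0) :
    (∀ p q r : h × g, extBracket α ρ (p + q) r
        = extBracket α ρ p r + extBracket α ρ q r) ∧
    (∀ p q r : h × g, extBracket α ρ p (q + r)
        = extBracket α ρ p q + extBracket α ρ p r) ∧
    (∀ (c : 𝕜) (p q : h × g), extBracket α ρ (c • p) q = c • extBracket α ρ p q) ∧
    (∀ (c : 𝕜) (p q : h × g), extBracket α ρ p (c • q) = c • extBracket α ρ p q) ∧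
    (∀ p : h × g, extBracket α ρ p p = 0) ∧
    (∀ p q r : h × g,
      extBracket α ρ (extBracket α ρ p q) r + extBracket α ρ (extBracket α ρ q r) p
        + extBracket α ρ (extBracket α ρ r p) q = 0) :=
  statement3_general α ρ halt h53 h54
end

section
/- Suppose the Lie algebra h has trivial center and α : g → Der(h) is a 𝕜-linear map such that for all X, Y ∈ g the derivation ⁅α_X, α_Y⁆ − α_{⁅X,Y⁆} is inner (lies in the range of ad : h → Der(h)). Then there is a unique alternating 𝕜-bilinear map ρ : g × g → h with ad_{ρ(X,Y)} = ⁅α_X, α_Y⁆ − α_{⁅X,Y⁆} for all X, Y ∈ g, and this ρ automatically satisfies condition (5.4): α_X(ρ(Y,Z)) + α_Y(ρ(Z,X)) + α_Z(ρ(X,Y)) − ρ(⁅X,Y⁆,Z) − ρ(⁅Y,Z⁆,X) − ρ(⁅Z,X⁆,Y) = 0 for all X, Y, Z ∈ g. -/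
/-!
Trivial center means that `ad : h → Der(h)` is injective, so every identity in `h` can be checked
after applying `ad`. The values `ρ X Y` are therefore determined by the curvature
`⁅α X, α Y⁆ - α ⁅X, Y⁆`, and inherit from it bilinearity and the alternating property. Since
`ad (D H) = ⁅D, ad H⁆` for a derivation `D`, applying `ad` to the left side of (5.4) turns it into
the Bianchi identity for this curvature, which follows from the Jacobi identities in `Der(h)` and
in `g`.
-/

section Curvature

variable {R L₁ L₂ : Type*} [CommRing R] [LieRing L₁] [LieAlgebra R L₁]
  [LieRing L₂] [LieAlgebra R L₂]

/-- The curvature `⁅α x, α y⁆ - α ⁅x, y⁆` of a linear map `α` between Lie algebras, as a bilinear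
map: it measures the failure of `α` to be a homomorphism of Lie algebras. -/
def lieCurvature (α : L₁ →ₗ[R] L₂) : L₁ →ₗ[R] L₁ →ₗ[R] L₂ :=
  LinearMap.mk₂ R (fun x y ↦ ⁅α x, α y⁆ - α ⁅x, y⁆)
    (fun x₁ x₂ y ↦ by simp only [map_add, add_lie]; abel)
    (fun c x y ↦ by simp only [map_smul, smul_lie, smul_sub])
    (fun x y₁ y₂ ↦ by simp only [map_add, lie_add]; abel)
    (fun c x y ↦ by simp only [map_smul, lie_smul, smul_sub])

variable (α : L₁ →ₗ[R] L₂) (x y z : L₁)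

theorem lieCurvature_apply : lieCurvature α x y = ⁅α x, α y⁆ - α ⁅x, y⁆ :=
  rfl

theorem lieCurvature_self : lieCurvature α x x = 0 := by
  simp [lieCurvature_apply]

theorem lieCurvature_bianchi :
    ⁅α x, lieCurvature α y z⁆ + ⁅α y, lieCurvature α z x⁆ + ⁅α z, lieCurvature α x y⁆
      - lieCurvature α ⁅x, y⁆ z - lieCurvature α ⁅y, z⁆ x - lieCurvature α ⁅z, x⁆ y = 0 := by
  have jacobi_target := lie_jacobi (α x) (α y) (α z)
  have jacobi_source : α ⁅x, ⁅y, z⁆⁆ + α ⁅y, ⁅z, x⁆⁆ + α ⁅z, ⁅x, y⁆⁆ = 0 := by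
    rw [← map_add, ← map_add, lie_jacobi, map_zero]
  have curvature_bracket (u v w : L₁) :
      lieCurvature α ⁅u, v⁆ w = α ⁅w, ⁅u, v⁆⁆ - ⁅α w, α ⁅u, v⁆⁆ := by
    rw [lieCurvature_apply, ← lie_skew, ← lie_skew ⁅u, v⁆ w, map_neg]
    abel
  simp only [curvature_bracket, lieCurvature_apply, lie_sub]
  -- The mixed terms `⁅α x, α ⁅y, z⁆⁆` cancel, leaving the two Jacobi sums.
  linear_combination (norm := module) jacobi_target - jacobi_source

end Curvature

theorem existsUnique_alternating_lift_of_injective {R M N P : Type*} [CommSemiring R]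
    [AddCommMonoid M] [Module R M] [AddCommMonoid N] [Module R N] [AddCommMonoid P] [Module R P]
    {i : N →ₗ[R] P} (hi : Function.Injective i) {f : M →ₗ[R] M →ₗ[R] P}
    (hf_alt : ∀ x, f x x = 0) (hf_range : ∀ x y, f x y ∈ i.range) :
    ∃! ρ : M →ₗ[R] M →ₗ[R] N, (∀ x, ρ x x = 0) ∧ ∀ x y, i (ρ x y) = f x y := by
  refine ⟨f.codRestrict₂ i hi hf_range, ⟨fun x ↦ hi ?_, f.codRestrict₂_apply i hi hf_range⟩, ?_⟩
  · rw [f.codRestrict₂_apply, hf_alt, map_zero]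
  · rintro ρ ⟨-, hρ⟩
    ext x y
    apply hi
    rw [hρ, f.codRestrict₂_apply]

section Derivation

variable {R h g : Type*} [CommRing R] [LieRing h] [LieAlgebra R h]

theorem injective_ad_of_forall_lie_eq_zero (hZ : ∀ H : h, (∀ K : h, ⁅H, K⁆ = 0) → H = 0) :
    Function.Injective (LieDerivation.ad R h) := by
  apply LieDerivation.injective_ad_of_center_eq_bot
  rw [← LieAlgebra.self_module_ker_eq_center, LieSubmodule.eq_bot_iff]
  exact fun H hH ↦ hZ H ((LieModule.mem_ker (R := R) (L := h) h H).mp hH)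

variable [LieRing g] [LieAlgebra R g]

theorem ad_cyclic_sum_eq_zero_of_ad_eq_lieCurvature {α : g →ₗ[R] LieDerivation R h h}
    {ρ : g →ₗ[R] g →ₗ[R] h} (hρ : ∀ X Y, LieDerivation.ad R h (ρ X Y) = lieCurvature α X Y)
    (X Y Z : g) :
    LieDerivation.ad R h (α X (ρ Y Z) + α Y (ρ Z X) + α Z (ρ X Y)
      - ρ ⁅X, Y⁆ Z - ρ ⁅Y, Z⁆ X - ρ ⁅Z, X⁆ Y) = 0 := by
  simpa only [map_add, map_sub, ← LieDerivation.lie_der_ad_eq_ad_der, hρ]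
    using lieCurvature_bianchi α X Y Z

theorem statement8_general (hZ : ∀ H : h, (∀ K : h, ⁅H, K⁆ = 0) → H = 0)
    (α : g →ₗ[R] LieDerivation R h h)
    (hinner : ∀ X Y : g, ∃ H : h, ⁅α X, α Y⁆ - α ⁅X, Y⁆ = LieDerivation.ad R h H) :
    (∃! ρ : g →ₗ[R] g →ₗ[R] h,
      (∀ X : g, ρ X X = 0) ∧
      (∀ X Y : g, LieDerivation.ad R h (ρ X Y) = ⁅α X, α Y⁆ - α ⁅X, Y⁆)) ∧
    (∀ ρ : g →ₗ[R] g →ₗ[R] h,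
      (∀ X Y : g, LieDerivation.ad R h (ρ X Y) = ⁅α X, α Y⁆ - α ⁅X, Y⁆) →
      ∀ X Y Z : g,
        α X (ρ Y Z) + α Y (ρ Z X) + α Z (ρ X Y)
          - ρ ⁅X, Y⁆ Z - ρ ⁅Y, Z⁆ X - ρ ⁅Z, X⁆ Y = 0) := by
  have ad_injective : Function.Injective (LieDerivation.ad R h) :=
    injective_ad_of_forall_lie_eq_zero hZ
  have curvature_mem_range (X Y : g) :
      lieCurvature α X Y ∈ (LieDerivation.ad R h : h →ₗ[R] LieDerivation R h h).range :=
    (hinner X Y).imp fun _ hH ↦ hH.symm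
  constructor
  · exact existsUnique_alternating_lift_of_injective ad_injective (lieCurvature_self α)
      curvature_mem_range
  · intro ρ hρ X Y Z
    apply ad_injective
    rw [ad_cyclic_sum_eq_zero_of_ad_eq_lieCurvature hρ, map_zero]

end Derivation

/-- Suppose the Lie algebra `h` has trivial center and
`α : g → Der(h)` is a `𝕜`-linear map such that for all `X, Y ∈ g` the derivation
`⁅α X, α Y⁆ - α ⁅X,Y⁆` is inner.  Then there is a unique alternating `𝕜`-bilinear
map `ρ : g × g → h` with `ad_(ρ X Y) = ⁅α X, α Y⁆ - α ⁅X,Y⁆` for all `X, Y`, and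
this `ρ` automatically satisfies condition (5.4). -/
theorem statement8 {𝕜 : Type*} [Field 𝕜] {h g : Type*} [LieRing h] [LieAlgebra 𝕜 h]
    [LieRing g] [LieAlgebra 𝕜 g]
    (hZ : ∀ H : h, (∀ K : h, ⁅H, K⁆ = 0) → H = 0)
    (α : g →ₗ[𝕜] LieDerivation 𝕜 h h)
    (hinner : ∀ X Y : g, ∃ H : h, ⁅α X, α Y⁆ - α ⁅X, Y⁆ = LieDerivation.ad 𝕜 h H) :
    (∃! ρ : g →ₗ[𝕜] g →ₗ[𝕜] h,
      (∀ X : g, ρ X X = 0) ∧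
      (∀ X Y : g, LieDerivation.ad 𝕜 h (ρ X Y) = ⁅α X, α Y⁆ - α ⁅X, Y⁆)) ∧
    (∀ ρ : g →ₗ[𝕜] g →ₗ[𝕜] h, (∀ X : g, ρ X X = 0) →
      (∀ X Y : g, LieDerivation.ad 𝕜 h (ρ X Y) = ⁅α X, α Y⁆ - α ⁅X, Y⁆) →
      ∀ X Y Z : g,
        α X (ρ Y Z) + α Y (ρ Z X) + α Z (ρ X Y)
          - ρ ⁅X, Y⁆ Z - ρ ⁅Y, Z⁆ X - ρ ⁅Z, X⁆ Y = 0) := by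
  have ⟨existsUnique, cocycle⟩ := statement8_general hZ α hinner
  exact ⟨existsUnique, fun ρ _ ↦ cocycle ρ⟩
end

section
/- Let h be a Lie ideal of a Lie algebra e over 𝕜 such that h has trivial center and every 𝕜-linear derivation of h is inner. Then there is an isomorphism of Lie algebras φ : e ≅ h × (e/h) such that φ(H) = (H, 0) for every H ∈ h and the second component of φ is the quotient projection e → e/h; in particular e is isomorphic, as an extension of e/h by h, to the direct product h × (e/h). -/
/-- The direct-product Lie ring structure on `L × M` (componentwise bracket). -/
instance prodLieRing {L M : Type*} [LieRing L] [LieRing M] : LieRing (L × M) where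
  bracket p q := (⁅p.1, q.1⁆, ⁅p.2, q.2⁆)
  add_lie x y z := Prod.ext (add_lie x.1 y.1 z.1) (add_lie x.2 y.2 z.2)
  lie_add x y z := Prod.ext (lie_add x.1 y.1 z.1) (lie_add x.2 y.2 z.2)
  lie_self x := Prod.ext (lie_self x.1) (lie_self x.2)
  leibniz_lie x y z := Prod.ext (leibniz_lie x.1 y.1 z.1) (leibniz_lie x.2 y.2 z.2)

/-- The direct-product Lie algebra structure on `L × M`. -/
instance prodLieAlgebra {𝕜 L M : Type*} [CommRing 𝕜] [LieRing L] [LieAlgebra 𝕜 L]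
    [LieRing M] [LieAlgebra 𝕜 M] : LieAlgebra 𝕜 (L × M) where
  lie_smul t x y := Prod.ext (lie_smul t x.1 y.1) (lie_smul t x.2 y.2)

/-!
If `ad : I → Der I` is bijective, then each `x : e` acts on the ideal `I` as `ad (p x)` for a unique
`p x : I`. The map `p`, the composite of `e → Der I` with the inverse of `ad`, is a Lie algebra
homomorphism restricting to the identity on `I`, so its kernel is an ideal complementary to `I`.
-/

section

variable {R L : Type*} [CommRing R] [LieRing L] [LieAlgebra R L]

theorem bijective_ad_of_center_trivial_of_derivations_inner
    (hZ : ∀ H : L, (∀ K : L, ⁅H, K⁆ = 0) → H = 0)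
    (hder : ∀ D : LieDerivation R L L, ∃ H : L, D = LieDerivation.ad R L H) :
    Function.Bijective (LieDerivation.ad R L) := by
  refine ⟨LieDerivation.injective_ad_of_center_eq_bot ?_, fun D => (hder D).imp fun _ => Eq.symm⟩
  exact (LieSubmodule.eq_bot_iff _).2 fun H hH => hZ H fun K => by
    rw [← lie_skew, (LieModule.mem_maxTrivSubmodule R L L H).1 hH K, neg_zero]

variable (I : LieIdeal R L)

/-- The adjoint action of a Lie algebra on one of its ideals, as a morphism of Lie algebras into
the derivations of the ideal. -/
def adOnIdeal : L →ₗ⁅R⁆ LieDerivation R I I where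
  toFun x :=
    { toLinearMap := LieModule.toEnd R L I x
      leibniz' a b := by
        ext
        simp only [LieModule.toEnd_apply_apply, LieSubmodule.coe_bracket,
          LieIdeal.coe_bracket_of_module, LieSubmodule.coe_sub]
        rw [leibniz_lie, ← lie_skew (b : L), sub_neg_eq_add, add_comm] }
  map_add' x y := by ext; simp
  map_smul' r x := by ext; simp
  map_lie' {x y} := by ext; simp

theorem adOnIdeal_apply_apply (x : L) (K : I) : adOnIdeal I x K = ⁅x, K⁆ :=
  rfl

theorem adOnIdeal_coe (H : I) : adOnIdeal I (H : L) = LieDerivation.ad R I H := by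
  ext K
  rw [adOnIdeal_apply_apply, LieDerivation.ad_apply_apply, LieIdeal.coe_bracket_of_module]

section

variable (had : Function.Bijective (LieDerivation.ad R I))

/-- The projection of a Lie algebra onto an ideal `I` with `ad : I → Der I` bijective: it sends `x`
to the unique element of `I` that acts on `I` as `x` does. -/
noncomputable def idealRetraction : L →ₗ⁅R⁆ I :=
  (LieEquiv.ofBijective (LieDerivation.ad R I) had).symm.toLieHom.comp (adOnIdeal I)

theorem ad_idealRetraction (x : L) :
    LieDerivation.ad R I (idealRetraction I had x) = adOnIdeal I x :=
  (LieEquiv.ofBijective (LieDerivation.ad R I) had).apply_symm_apply (adOnIdeal I x)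

theorem idealRetraction_coe (H : I) : idealRetraction I had (H : L) = H :=
  had.injective ((ad_idealRetraction I had H).trans (adOnIdeal_coe I H))

end

/-- The splitting `x ↦ (p x, x mod I)` of a Lie algebra determined by a Lie algebra retraction `p`
onto an ideal `I`. -/
noncomputable def prodQuotientEquivOfRetraction (p : L →ₗ⁅R⁆ I)
    (hp : ∀ H : I, p (H : L) = H) : L ≃ₗ⁅R⁆ I × (L ⧸ I) where
  __ := LinearMap.equivProdOfSurjectiveOfIsCompl (p : L →ₗ[R] I) I.toSubmodule.mkQ
    (LinearMap.range_eq_top.2 fun H => ⟨H, hp H⟩) I.toSubmodule.range_mkQ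
    (I.toSubmodule.ker_mkQ.symm ▸ (LinearMap.isCompl_of_proj hp).symm)
  map_lie' {x y} := Prod.ext (p.map_lie x y) (LieSubmodule.Quotient.mk_bracket I x y)

theorem prodQuotientEquivOfRetraction_apply (p : L →ₗ⁅R⁆ I)
    (hp : ∀ H : I, p (H : L) = H) (x : L) :
    prodQuotientEquivOfRetraction I p hp x = (p x, LieSubmodule.Quotient.mk' I x) :=
  rfl

theorem statement9_general
    (hZ : ∀ H : I, (∀ K : I, ⁅H, K⁆ = 0) → H = 0)
    (hder : ∀ D : LieDerivation R I I, ∃ H : I, D = LieDerivation.ad R I H) :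
    ∃ φ : L ≃ₗ⁅R⁆ I × (L ⧸ I),
      (∀ H : I, φ (H : L) = (H, 0)) ∧ ∀ x : L, (φ x).2 = LieSubmodule.Quotient.mk' I x := by
  have had := bijective_ad_of_center_trivial_of_derivations_inner hZ hder
  refine ⟨prodQuotientEquivOfRetraction I (idealRetraction I had) (idealRetraction_coe I had),
    fun H => ?_, fun _ => rfl⟩
  rw [prodQuotientEquivOfRetraction_apply, idealRetraction_coe,
    (LieSubmodule.Quotient.mk_eq_zero I).2 H.2]

end

/-- Let `I` be a Lie ideal of a Lie algebra `e` over `𝕜` such that `I`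
has trivial center and every `𝕜`-linear derivation of `I` is inner.  Then there is
an isomorphism of Lie algebras `φ : e ≅ I × (e ⧸ I)` (for the componentwise Lie
algebra structure on the product) such that `φ H = (H, 0)` for every `H ∈ I` and the
second component of `φ` is the quotient projection `e → e ⧸ I`; in particular `e`
is isomorphic, as an extension of `e ⧸ I` by `I`, to the direct product. -/
theorem statement9 {𝕜 : Type*} [Field 𝕜] {e : Type*} [LieRing e] [LieAlgebra 𝕜 e]
    (I : LieIdeal 𝕜 e)
    (hZ : ∀ H : I, (∀ K : I, ⁅H, K⁆ = 0) → H = 0)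
    (hder : ∀ D : LieDerivation 𝕜 I I, ∃ H : I, D = LieDerivation.ad 𝕜 I H) :
    ∃ φ : e ≃ₗ[𝕜] I × (e ⧸ I),
      (∀ x y : e, φ ⁅x, y⁆ = ⁅φ x, φ y⁆) ∧
      (∀ H : I, φ (H : e) = (H, 0)) ∧
      (∀ x : e, (φ x).2 = LieSubmodule.Quotient.mk' I x) := by
  obtain ⟨φ, hφ⟩ := statement9_general I hZ hder
  exact ⟨φ.toLinearEquiv, φ.map_lie, hφ⟩
end

section
/- Suppose α : g → Der(h) is 𝕜-linear and ρ, ρ' : g × g → h are alternating bilinear maps both satisfying ad_{ρ(X,Y)} = ad_{ρ'(X,Y)} = ⁅α_X, α_Y⁆ − α_{⁅X,Y⁆} for all X, Y ∈ g. Then μ := ρ − ρ' takes values in the center Z(h), and λ(α,ρ)(X,Y,Z) − λ(α,ρ')(X,Y,Z) = α_X(μ(Y,Z)) + α_Y(μ(Z,X)) + α_Z(μ(X,Y)) − μ(⁅X,Y⁆,Z) − μ(⁅Y,Z⁆,X) − μ(⁅Z,X⁆,Y) for all X, Y, Z ∈ g. -/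
/-- The 3-cochain `λ(α,ρ)` of a pair `(α, ρ)`:
`λ X Y Z = α X (ρ Y Z) + α Y (ρ Z X) + α Z (ρ X Y)
- ρ ⁅X,Y⁆ Z - ρ ⁅Y,Z⁆ X - ρ ⁅Z,X⁆ Y`. -/
def lambdaCochain {𝕜 : Type*} [Field 𝕜] {h g : Type*} [LieRing h] [LieAlgebra 𝕜 h]
    [LieRing g] [LieAlgebra 𝕜 g] (α : g →ₗ[𝕜] LieDerivation 𝕜 h h)
    (ρ : g →ₗ[𝕜] g →ₗ[𝕜] h) (X Y Z : g) : h :=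
  α X (ρ Y Z) + α Y (ρ Z X) + α Z (ρ X Y)
    - ρ ⁅X, Y⁆ Z - ρ ⁅Y, Z⁆ X - ρ ⁅Z, X⁆ Y

theorem ad_eq_ad_iff_sub_mem_center {R L : Type*} [CommRing R] [LieRing L] [LieAlgebra R L]
    {x y : L} :
    LieDerivation.ad R L x = LieDerivation.ad R L y ↔ x - y ∈ LieAlgebra.center R L := by
  rw [← LieDerivation.ad_ker_eq_center, LieHom.mem_ker, map_sub, sub_eq_zero]

section

variable {𝕜 : Type*} [Field 𝕜] {h g : Type*} [LieRing h] [LieAlgebra 𝕜 h]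
  [LieRing g] [LieAlgebra 𝕜 g] (α : g →ₗ[𝕜] LieDerivation 𝕜 h h)

theorem lambdaCochain_sub (ρ ρ' : g →ₗ[𝕜] g →ₗ[𝕜] h) :
    lambdaCochain α (ρ - ρ') = lambdaCochain α ρ - lambdaCochain α ρ' := by
  ext X Y Z
  simp only [lambdaCochain, Pi.sub_apply, LinearMap.sub_apply, map_sub]
  abel

theorem statement13_general {ρ ρ' : g →ₗ[𝕜] g →ₗ[𝕜] h}
    (had : ∀ X Y : g, LieDerivation.ad 𝕜 h (ρ X Y) = LieDerivation.ad 𝕜 h (ρ' X Y)) :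
    (∀ X Y : g, (ρ - ρ') X Y ∈ LieAlgebra.center 𝕜 h) ∧
      lambdaCochain α ρ - lambdaCochain α ρ' = lambdaCochain α (ρ - ρ') :=
  ⟨fun X Y => ad_eq_ad_iff_sub_mem_center.mp (had X Y), (lambdaCochain_sub α ρ ρ').symm⟩

end

/-- Suppose `α : g → Der(h)` is `𝕜`-linear and `ρ, ρ' : g × g → h` are
alternating bilinear maps both satisfying
`ad_(ρ X Y) = ad_(ρ' X Y) = ⁅α X, α Y⁆ - α ⁅X,Y⁆` for all `X, Y ∈ g`.  Then
`μ := ρ - ρ'` takes values in the center `Z(h)`, and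
`λ(α,ρ) - λ(α,ρ') = δ_α μ` (the Chevalley coboundary of `μ`). -/
theorem statement13 {𝕜 : Type*} [Field 𝕜] {h g : Type*} [LieRing h] [LieAlgebra 𝕜 h]
    [LieRing g] [LieAlgebra 𝕜 g] (α : g →ₗ[𝕜] LieDerivation 𝕜 h h)
    (ρ ρ' : g →ₗ[𝕜] g →ₗ[𝕜] h)
    (halt : ∀ X : g, ρ X X = 0) (halt' : ∀ X : g, ρ' X X = 0)
    (h53 : ∀ X Y : g, LieDerivation.ad 𝕜 h (ρ X Y) = ⁅α X, α Y⁆ - α ⁅X, Y⁆)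
    (h53' : ∀ X Y : g, LieDerivation.ad 𝕜 h (ρ' X Y) = ⁅α X, α Y⁆ - α ⁅X, Y⁆) :
    let μ : g → g → h := fun X Y => ρ X Y - ρ' X Y
    (∀ X Y : g, μ X Y ∈ LieAlgebra.center 𝕜 h) ∧
    (∀ X Y Z : g,
      lambdaCochain α ρ X Y Z - lambdaCochain α ρ' X Y Z
        = α X (μ Y Z) + α Y (μ Z X) + α Z (μ X Y)
          - μ ⁅X, Y⁆ Z - μ ⁅Y, Z⁆ X - μ ⁅Z, X⁆ Y) := by
  obtain ⟨hcenter, hsub⟩ := statement13_general α fun X Y => (h53 X Y).trans (h53' X Y).symm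
  exact ⟨hcenter, fun X Y Z => congrFun (congrFun₂ hsub X Y) Z⟩
end

section
/- Let h be an abelian Lie algebra, α : g → End(h) a homomorphism of Lie algebras (so h is a g-module), and let ρ, ρ' : g × g → h be alternating bilinear maps each satisfying the 2-cocycle condition α_X(ρ(Y,Z)) + α_Y(ρ(Z,X)) + α_Z(ρ(X,Y)) − ρ(⁅X,Y⁆,Z) − ρ(⁅Y,Z⁆,X) − ρ(⁅Z,X⁆,Y) = 0 (and likewise for ρ'). Then there exists an isomorphism of Lie algebras ψ : e(α,ρ) → e(α,ρ') with ψ(H,0) = (H,0) for all H ∈ h and pr₂ ∘ ψ = pr₂ if and only if there is a 𝕜-linear map b : g → h with ρ'(X,Y) − ρ(X,Y) = α_X(b(Y)) − α_Y(b(X)) − b(⁅X,Y⁆) for all X, Y ∈ g, i.e. iff ρ and ρ' differ by a Chevalley coboundary. -/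
/-- The bracket on `e(α,ρ) = h × g` for an abelian kernel `h`:
`⁅(H₁,X₁),(H₂,X₂)⁆ = (α X₁ H₂ - α X₂ H₁ + ρ X₁ X₂, ⁅X₁,X₂⁆)`. -/
def abelExtBracket {𝕜 : Type*} [Field 𝕜] {h g : Type*} [LieRing h] [LieAlgebra 𝕜 h]
    [LieRing g] [LieAlgebra 𝕜 g] (α : g →ₗ[𝕜] LieDerivation 𝕜 h h)
    (ρ : g →ₗ[𝕜] g →ₗ[𝕜] h) (p q : h × g) : h × g :=
  (α p.2 q.1 - α q.2 p.1 + ρ p.2 q.2, ⁅p.2, q.2⁆)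

/-!
The linear automorphisms of `h × g` that fix `h` pointwise and commute with the projection to `g`
are exactly the shears `(H, X) ↦ (H - b X, X)` with `b : g → h` linear. Comparing `h`-components,
such a shear carries the bracket of `e(α,ρ)` to that of `e(α,ρ')` iff `ρ' - ρ` is the Chevalley
coboundary of `b`.
-/

section Shear

variable {R M N : Type*} [Ring R] [AddCommGroup M] [AddCommGroup N] [Module R M] [Module R N]

/-- The shear `(m, n) ↦ (m - b n, n)` of `M × N` along `b : N → M`. The sign is chosen so that an
equivalence of extensions `e(α,ρ) ≃ e(α,ρ')` given by `shear b` corresponds to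
`ρ' - ρ` being the coboundary of `b`, rather than of `-b`. -/
def shear (b : N →ₗ[R] M) : (M × N) ≃ₗ[R] (M × N) :=
  LinearEquiv.prodComm R M N ≪≫ₗ
    (LinearEquiv.refl R N).skewProd (LinearEquiv.refl R M) (-b) ≪≫ₗ LinearEquiv.prodComm R N M

@[simp]
theorem shear_apply (b : N →ₗ[R] M) (p : M × N) : shear b p = (p.1 - b p.2, p.2) := by
  simp [shear, sub_eq_add_neg]

theorem exists_shear_eq_iff {f : M × N →ₗ[R] M × N} :
    (∃ b : N →ₗ[R] M, (shear b : M × N →ₗ[R] M × N) = f) ↔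
      (∀ m : M, f (m, 0) = (m, 0)) ∧ ∀ p : M × N, (f p).2 = p.2 := by
  constructor
  · rintro ⟨b, rfl⟩
    simp
  · rintro ⟨fix_left, snd_comm⟩
    refine ⟨-(LinearMap.fst R M N ∘ₗ f ∘ₗ LinearMap.inr R M N), ?_⟩
    ext x <;> simp [fix_left, snd_comm]

end Shear

section Extension

variable {𝕜 : Type*} [Field 𝕜] {h g : Type*} [LieRing h] [LieAlgebra 𝕜 h]
  [LieRing g] [LieAlgebra 𝕜 g]

theorem shear_abelExtBracket_iff (α : g →ₗ[𝕜] LieDerivation 𝕜 h h) (ρ ρ' : g →ₗ[𝕜] g →ₗ[𝕜] h)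
    (b : g →ₗ[𝕜] h) :
    (∀ p q : h × g, shear b (abelExtBracket α ρ p q) =
      abelExtBracket α ρ' (shear b p) (shear b q)) ↔
    ∀ X Y : g, ρ' X Y - ρ X Y = α X (b Y) - α Y (b X) - b ⁅X, Y⁆ := by
  simp only [abelExtBracket, shear_apply, Prod.mk.injEq, and_true, map_sub]
  constructor
  · intro fst_eq X Y
    have fst_eq_on_g := fst_eq (0, X) (0, Y)
    simp only [map_zero] at fst_eq_on_g
    linear_combination (norm := module) -fst_eq_on_g
  · intro coboundary p q
    linear_combination (norm := module) -coboundary p.2 q.2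

theorem statement16_general (α : g →ₗ[𝕜] LieDerivation 𝕜 h h) (ρ ρ' : g →ₗ[𝕜] g →ₗ[𝕜] h) :
    (∃ ψ : (h × g) ≃ₗ[𝕜] (h × g),
      (∀ p q : h × g, ψ (abelExtBracket α ρ p q) = abelExtBracket α ρ' (ψ p) (ψ q)) ∧
      (∀ H : h, ψ (H, 0) = (H, 0)) ∧
      (∀ p : h × g, (ψ p).2 = p.2)) ↔
    (∃ b : g →ₗ[𝕜] h,
      ∀ X Y : g, ρ' X Y - ρ X Y = α X (b Y) - α Y (b X) - b ⁅X, Y⁆) := by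
  constructor
  · rintro ⟨ψ, bracket_comm, fix_and_snd⟩
    obtain ⟨b, shear_eq⟩ := exists_shear_eq_iff (f := ψ.toLinearMap).mpr fix_and_snd
    obtain rfl := LinearEquiv.toLinearMap_injective shear_eq
    exact ⟨b, (shear_abelExtBracket_iff α ρ ρ' b).mp bracket_comm⟩
  · rintro ⟨b, coboundary⟩
    exact ⟨shear b, (shear_abelExtBracket_iff α ρ ρ' b).mpr coboundary,
      exists_shear_eq_iff.mp ⟨b, rfl⟩⟩

end Extension

/-- Let `h` be an abelian Lie algebra (so that every `𝕜`-linear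
endomorphism of `h` is a derivation and `Der(h) = gl(h)`), `α : g → gl(h)` a
homomorphism of Lie algebras (so `h` is a `g`-module), and let `ρ, ρ' : g × g → h`
be alternating bilinear 2-cocycles.  Then there exists an isomorphism of Lie
algebras `ψ : e(α,ρ) → e(α,ρ')` with `ψ (H,0) = (H,0)` and `pr₂ ∘ ψ = pr₂` if and
only if there is a `𝕜`-linear map `b : g → h` with
`ρ' X Y - ρ X Y = α X (b Y) - α Y (b X) - b ⁅X,Y⁆` for all `X, Y ∈ g`, i.e. iff
`ρ` and `ρ'` differ by a Chevalley coboundary. -/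
theorem statement16 {𝕜 : Type*} [Field 𝕜] {h g : Type*} [LieRing h] [LieAlgebra 𝕜 h]
    [LieRing g] [LieAlgebra 𝕜 g] [IsLieAbelian h]
    (α : g →ₗ[𝕜] LieDerivation 𝕜 h h)
    (hα : ∀ X Y : g, α ⁅X, Y⁆ = ⁅α X, α Y⁆)
    (ρ ρ' : g →ₗ[𝕜] g →ₗ[𝕜] h)
    (halt : ∀ X : g, ρ X X = 0) (halt' : ∀ X : g, ρ' X X = 0)
    (hcoc : ∀ X Y Z : g,
      α X (ρ Y Z) + α Y (ρ Z X) + α Z (ρ X Y)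
        - ρ ⁅X, Y⁆ Z - ρ ⁅Y, Z⁆ X - ρ ⁅Z, X⁆ Y = 0)
    (hcoc' : ∀ X Y Z : g,
      α X (ρ' Y Z) + α Y (ρ' Z X) + α Z (ρ' X Y)
        - ρ' ⁅X, Y⁆ Z - ρ' ⁅Y, Z⁆ X - ρ' ⁅Z, X⁆ Y = 0) :
    (∃ ψ : (h × g) ≃ₗ[𝕜] (h × g),
      (∀ p q : h × g, ψ (abelExtBracket α ρ p q) = abelExtBracket α ρ' (ψ p) (ψ q)) ∧
      (∀ H : h, ψ (H, 0) = (H, 0)) ∧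
      (∀ p : h × g, (ψ p).2 = p.2)) ↔
    (∃ b : g →ₗ[𝕜] h,
      ∀ X Y : g, ρ' X Y - ρ X Y = α X (b Y) - α Y (b X) - b ⁅X, Y⁆) :=
  statement16_general α ρ ρ'
end

section
/- Let h have trivial center and let α : g → Der(h) be a 𝕜-linear map such that ⁅α_X, α_Y⁆ − α_{⁅X,Y⁆} is an inner derivation for all X, Y ∈ g. Then there exists a Lie algebra e over 𝕜, an injective Lie algebra homomorphism i : h → e whose image is a Lie ideal, and a surjective Lie algebra homomorphism q : e → g with kernel i(h), together with a 𝕜-linear section s : g → e of q such that ⁅s(X), i(H)⁆ = i(α_X(H)) for all X ∈ g and H ∈ h; i.e. there exists a Lie algebra extension of g by h whose induced action of g on h is the given α. -/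
/-!
Modulo the ideal of inner derivations, `α` becomes a Lie algebra homomorphism from `g` to the outer
derivations `Der(h) / ad(h)`, and the extension is the pullback along it of the quotient map
`Der(h) → Der(h) / ad(h)`: the pairs `(D, X)` in `Der(h) × g` with `D - α X` inner. The kernel of
the projection to `g` is `ad(h)`, which is a copy of `h` because the center is trivial, and
`X ↦ (α X, X)` is the section. The Jacobi identity is inherited from `Der(h) × g`, so no cocycle
condition has to be checked.
-/

universe u v

/-- A Lie algebra extension `0 → h → E → g → 0` together with a `𝕜`-linear section
`s` of the projection realizing a prescribed action `α : g → Der(h)` of `g` on the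
kernel `h`: `⁅s X, i H⁆ = i (α X H)`. -/
structure LieExtensionWithAction (𝕜 : Type*) [Field 𝕜] (h : Type u) (g : Type v)
    [LieRing h] [LieAlgebra 𝕜 h] [LieRing g] [LieAlgebra 𝕜 g]
    (α : g →ₗ[𝕜] LieDerivation 𝕜 h h) where
  /-- the middle Lie algebra of the extension -/
  E : Type (max u v)
  [instLieRing : LieRing E]
  [instLieAlgebra : LieAlgebra 𝕜 E]
  /-- the inclusion of the kernel -/
  i : h →ₗ⁅𝕜⁆ E
  i_injective : Function.Injective i
  /-- the image of `i` is a Lie ideal of `E` -/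
  range_ideal : ∀ (x : E) (H : h), ∃ K : h, ⁅x, i H⁆ = i K
  /-- the projection onto `g` -/
  q : E →ₗ⁅𝕜⁆ g
  q_surjective : Function.Surjective q
  /-- the kernel of `q` is exactly the image of `i` -/
  ker_eq_range : ∀ x : E, q x = 0 ↔ ∃ H : h, i H = x
  /-- a `𝕜`-linear section of `q` -/
  s : g →ₗ[𝕜] E
  sect : ∀ X : g, q (s X) = X
  /-- the induced action of `g` on `h` is the given `α` -/
  compat : ∀ (X : g) (H : h), ⁅s X, i H⁆ = i (α X H)

open Function LieAlgebra

section GraphModIdeal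

variable {R L M N : Type*} [CommRing R] [LieRing L] [LieAlgebra R L] [LieRing M] [LieAlgebra R M]
  [LieRing N] [LieAlgebra R N]

/-- The graph modulo the ideal `I` of a linear map `f : M → L` that is a Lie algebra homomorphism
modulo `I`: the pairs `(x, m)` with `x ≡ f m` modulo `I`. It is the pullback of `L → L ⧸ I` along
the homomorphism `M → L ⧸ I` induced by `f`, encoded as a subalgebra of `L × M`. -/
def graphModIdeal (I : LieIdeal R L) (f : M →ₗ[R] L)
    (hf : ∀ m m' : M, ⁅f m, f m'⁆ - f ⁅m, m'⁆ ∈ I) : LieSubalgebra R (L × M) where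
  __ := I.toSubmodule.comap (LinearMap.fst R L M - f ∘ₗ LinearMap.snd R L M)
  lie_mem' := by
    rintro ⟨x, m⟩ ⟨y, m'⟩ (hx : x - f m ∈ I) (hy : y - f m' ∈ I)
    have lie_sub_eq : ⁅x, y⁆ - f ⁅m, m'⁆ =
        ⁅x, y - f m'⁆ + ⁅x - f m, f m'⁆ + (⁅f m, f m'⁆ - f ⁅m, m'⁆) := by
      simp only [lie_sub, sub_lie]
      abel
    change ⁅x, y⁆ - f ⁅m, m'⁆ ∈ I
    rw [lie_sub_eq]
    exact add_mem (add_mem (lie_mem_right R L I _ _ hy) (lie_mem_left R L I _ _ hx)) (hf m m')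

namespace graphModIdeal

section Ideal

variable {I : LieIdeal R L} {f : M →ₗ[R] L} (hf : ∀ m m' : M, ⁅f m, f m'⁆ - f ⁅m, m'⁆ ∈ I)

theorem mem_iff {p : L × M} : p ∈ graphModIdeal I f hf ↔ p.1 - f p.2 ∈ I := Iff.rfl

/-- The projection `(x, m) ↦ m`. -/
def proj : graphModIdeal I f hf →ₗ⁅R⁆ M :=
  (LieHom.snd R L M).comp (graphModIdeal I f hf).incl

/-- The linear section `m ↦ (f m, m)` of the projection. -/
def linearSection : M →ₗ[R] graphModIdeal I f hf :=
  (f.prod LinearMap.id).codRestrict (graphModIdeal I f hf).toSubmodule fun m ↦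
    (mem_iff hf).mpr (by simp)

theorem leftInverse_proj_linearSection : LeftInverse (proj hf) (linearSection hf) := fun _ ↦ rfl

end Ideal

section IdealRange

variable {φ : N →ₗ⁅R⁆ L} {f : M →ₗ[R] L}
  (hf : ∀ m m' : M, ⁅f m, f m'⁆ - f ⁅m, m'⁆ ∈ φ.idealRange)

/-- The homomorphism `n ↦ (φ n, 0)` into the graph modulo the ideal range of `φ`. -/
def inl : N →ₗ⁅R⁆ graphModIdeal φ.idealRange f hf where
  __ := ((LieHom.inl R L M).comp φ : N →ₗ[R] L × M).codRestrict
    (graphModIdeal φ.idealRange f hf).toSubmodule fun n ↦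
      (mem_iff hf).mpr (by simp [φ.mem_idealRange])
  map_lie' := Subtype.ext (((LieHom.inl R L M).comp φ).map_lie _ _)

theorem inl_injective (hφ : Injective φ) : Injective (inl hf) := fun _ _ h ↦
  hφ (congrArg (fun p ↦ p.1.1) h)

theorem exact_inl_proj (hφ : φ.IsIdealMorphism) : Exact (inl hf) (proj hf) := by
  rintro ⟨⟨x, m⟩, hx⟩
  constructor
  · rintro (rfl : m = 0)
    obtain ⟨n, rfl⟩ : ∃ n, φ n = x := by
      simpa only [mem_iff, map_zero, sub_zero, φ.mem_idealRange_iff hφ] using hx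
    exact ⟨n, rfl⟩
  · rintro ⟨n, hn⟩
    exact (congrArg (fun p ↦ p.1.2) hn).symm

theorem isExtension (hφ_inj : Injective φ) (hφ : φ.IsIdealMorphism) :
    IsExtension (inl hf) (proj hf) where
  ker_eq_bot := (inl hf).ker_eq_bot.mpr (inl_injective hf hφ_inj)
  range_eq_top := (proj hf).range_eq_top.mpr (leftInverse_proj_linearSection hf).surjective
  exact := (LieHom.range_eq_ker_iff _ _).mpr (exact_inl_proj hf hφ)

theorem lie_linearSection_inl {m : M} {n n' : N} (h : ⁅f m, φ n⁆ = φ n') :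
    ⁅linearSection hf m, inl hf n⁆ = inl hf n' :=
  Subtype.ext (Prod.ext h (lie_zero m))

end IdealRange

end graphModIdeal

end GraphModIdeal

/-- The `LieExtensionWithAction` given by an extension in the sense of Mathlib together with a
linear section inducing `α`. -/
def LieExtensionWithAction.ofExtension {𝕜 : Type*} [Field 𝕜] {h : Type u} {g : Type v}
    [LieRing h] [LieAlgebra 𝕜 h] [LieRing g] [LieAlgebra 𝕜 g] {α : g →ₗ[𝕜] LieDerivation 𝕜 h h}
    (E : Extension.{_, u, v, max u v} 𝕜 h g) (s : g →ₗ[𝕜] E.L) (hs : LeftInverse E.proj s)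
    (hα : ∀ (X : g) (H : h), ⁅s X, E.incl H⁆ = E.incl (α X H)) :
    LieExtensionWithAction 𝕜 h g α :=
  have exact : Exact E.incl E.proj := (LieHom.range_eq_ker_iff _ _).mp E.IsExtension.exact
  { E := E.L
    i := E.incl
    i_injective := E.incl_injective
    range_ideal := fun x H ↦
      ((exact _).mp (LieHom.mem_ker.mp (E.lie_incl_mem_ker x H))).imp fun _ ↦ Eq.symm
    q := E.proj
    q_surjective := E.proj_surjective
    ker_eq_range := exact
    s := s
    sect := hs
    compat := hα }

theorem ad_injective_of_forall_lie_eq_zero {R L : Type*} [CommRing R] [LieRing L] [LieAlgebra R L]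
    (hZ : ∀ x : L, (∀ y : L, ⁅x, y⁆ = 0) → x = 0) : Injective (LieDerivation.ad R L) :=
  (injective_iff_map_eq_zero _).mpr fun x hx ↦ hZ x fun y ↦ by
    simpa using LieDerivation.congr_fun hx y

theorem statement19_general {R : Type*} [CommRing R] {h : Type u} {g : Type v}
    [LieRing h] [LieAlgebra R h] [LieRing g] [LieAlgebra R g]
    (hZ : ∀ H : h, (∀ K : h, ⁅H, K⁆ = 0) → H = 0)
    (α : g →ₗ[R] LieDerivation R h h)
    (hinner : ∀ X Y : g, ∃ H : h, ⁅α X, α Y⁆ - α ⁅X, Y⁆ = LieDerivation.ad R h H) :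
    ∃ (E : Extension.{_, u, v, max u v} R h g) (s : g →ₗ[R] E.L),
      LeftInverse E.proj s ∧ ∀ (X : g) (H : h), ⁅s X, E.incl H⁆ = E.incl (α X H) := by
  have hα (X Y : g) : ⁅α X, α Y⁆ - α ⁅X, Y⁆ ∈ (LieDerivation.ad R h).idealRange :=
    LieDerivation.mem_ad_idealRange_iff.mpr ((hinner X Y).imp fun _ ↦ Eq.symm)
  have isExtension := graphModIdeal.isExtension hα (ad_injective_of_forall_lie_eq_zero hZ)
    (LieDerivation.ad_isIdealMorphism R h)
  exact ⟨isExtension.extension, graphModIdeal.linearSection hα,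
    graphModIdeal.leftInverse_proj_linearSection hα, fun X H ↦
      graphModIdeal.lie_linearSection_inl hα (LieDerivation.lie_der_ad_eq_ad_der (α X) H)⟩

/-- Let `h` have trivial center and let `α : g → Der(h)` be a
`𝕜`-linear map such that `⁅α X, α Y⁆ - α ⁅X,Y⁆` is an inner derivation for all
`X, Y ∈ g`.  Then there exists a Lie algebra extension of `g` by `h` whose induced
action of `g` on `h` is the given `α`. -/
theorem statement19 {𝕜 : Type*} [Field 𝕜] {h : Type u} {g : Type v}
    [LieRing h] [LieAlgebra 𝕜 h] [LieRing g] [LieAlgebra 𝕜 g]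
    (hZ : ∀ H : h, (∀ K : h, ⁅H, K⁆ = 0) → H = 0)
    (α : g →ₗ[𝕜] LieDerivation 𝕜 h h)
    (hinner : ∀ X Y : g, ∃ H : h, ⁅α X, α Y⁆ - α ⁅X, Y⁆ = LieDerivation.ad 𝕜 h H) :
    Nonempty (LieExtensionWithAction 𝕜 h g α) := by
  obtain ⟨E, s, hs, hα⟩ := statement19_general hZ α hinner
  exact ⟨.ofExtension E s hs hα⟩
end
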